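/- Let h = a·r₁ + b·r₂ where r₁ is the rank function of the wheel matroid W^{12}_2 and r₂ that of U^{134}_{2,3} on N_4, with a, b ≥ 0. Then h is entropic if and only if there exist a positive integer k and a partition (α₁,...,α_t) of k into positive integers such that a + b = log k and a = H(α₁/k, ..., α_t/k). -/

import Mathlib

open Finset

/-- Probability that the discrete random variable `Y` (on finite sample space `Ω`
with pmf `p`) takes the value `s`. -/
noncomputable def pr {Ω : Type} [Fintype Ω] {S : Type} [DecidableEq S]
    (p : Ω → ℝ) (Y : Ω → S) (s : S) : ℝ := ∑ ω, if Y ω = s then p ω else 0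

/-- Shannon entropy (base 2) of the discrete random variable `Y`. -/
noncomputable def ent {Ω : Type} [Fintype Ω] {S : Type} [DecidableEq S]
    (p : Ω → ℝ) (Y : Ω → S) : ℝ :=
  - ∑ s ∈ Finset.univ.image Y, pr p Y s * Real.logb 2 (pr p Y s)

/-- `h : 2^{N_n} → ℝ` is entropic: it is the entropy function of some random
vector `(X_1, …, X_n)` on finite alphabets. -/
def IsEntropic (n : ℕ) (h : Finset (Fin n) → ℝ) : Prop :=
  ∃ (m : Fin n → ℕ) (p : (∀ i, Fin (m i)) → ℝ),
    (∀ x, 0 ≤ p x) ∧ (∑ x, p x) = 1 ∧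
    ∀ A : Finset (Fin n), h A = ent p (fun x (i : A) => x i.1)

/-- Rank function of the matroid U^{B}_{k,|B|} on N₄ = {0,1,2,3}:
A ↦ min(k, |A ∩ B|); elements outside B are loops. -/
noncomputable def rkU (k : ℕ) (B : Finset (Fin 4)) (A : Finset (Fin 4)) : ℝ :=
  min (k : ℝ) ((A ∩ B).card : ℝ)

/-- Rank function of the rank-2 wheel matroid W^{12}₂ on N₄ = {0,1,2,3} in which
0 and 1 are parallel: r(A) = min(2, number of parallel classes {0,1},{2},{3}
meeting A). -/
noncomputable def rW12 (A : Finset (Fin 4)) : ℝ :=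
  min (2 : ℝ)
    (((if (A ∩ ({0,1} : Finset (Fin 4))).Nonempty then 1 else 0) +
      (if (2 : Fin 4) ∈ A then 1 else 0) +
      (if (3 : Fin 4) ∈ A then 1 else 0) : ℝ))

section helpers
variable {Ω : Type} [Fintype Ω] {S T : Type} [DecidableEq S] [DecidableEq T]

lemma pr_nonneg' (p : Ω → ℝ) (hp : ∀ x, 0 ≤ p x) (Y : Ω → S) (s : S) : 0 ≤ pr p Y s := by
  unfold pr
  refine Finset.sum_nonneg fun ω _ => ?_
  split_ifs
  · exact hp ω
  · exact le_rfl

lemma le_pr_self (p : Ω → ℝ) (hp : ∀ x, 0 ≤ p x) (Y : Ω → S) (ω : Ω) : p ω ≤ pr p Y (Y ω) := by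
  unfold pr
  have := Finset.single_le_sum (f := fun ω' => if Y ω' = Y ω then p ω' else 0)
    (s := Finset.univ) (fun i _ => by split_ifs; exacts [hp i, le_rfl])
    (Finset.mem_univ ω)
  simpa using this

lemma pr_mono_ker (p : Ω → ℝ) (hp : ∀ x, 0 ≤ p x) (Z : Ω → S) (X : Ω → T)
    (hk : ∀ x y, Z x = Z y → X x = X y) (ω : Ω) : pr p Z (Z ω) ≤ pr p X (X ω) := by
  unfold pr
  refine Finset.sum_le_sum fun x _ => ?_
  by_cases h : Z x = Z ω
  · simp [h, hk _ _ h]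
  · simp only [h, if_false]
    split_ifs
    · exact hp x
    · exact le_rfl

lemma exists_of_pr_pos (p : Ω → ℝ) (Y : Ω → S) (s : S) (h : 0 < pr p Y s) :
    ∃ ω, 0 < p ω ∧ Y ω = s := by
  by_contra! hc
  have : pr p Y s ≤ 0 := by
    unfold pr
    refine Finset.sum_nonpos fun x _ => ?_
    split_ifs with h1
    · by_contra! h2
      exact hc x h2 h1
    · exact le_rfl
  linarith

lemma sum_pr_mul [Fintype S] (p : Ω → ℝ) (Y : Ω → S) (g : S → ℝ) :
    ∑ s, pr p Y s * g s = ∑ ω, p ω * g (Y ω) := by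
  unfold pr
  simp only [Finset.sum_mul]
  rw [Finset.sum_comm]
  refine Finset.sum_congr rfl fun ω _ => ?_
  simp [ite_mul]

lemma ent_univ [Fintype S] (p : Ω → ℝ) (Y : Ω → S) :
    ent p Y = - ∑ s, pr p Y s * Real.logb 2 (pr p Y s) := by
  unfold ent
  congr 1
  refine Finset.sum_subset (Finset.subset_univ _) fun s _ hs => ?_
  have : pr p Y s = 0 := by
    unfold pr
    refine Finset.sum_eq_zero fun ω _ => ?_
    rw [if_neg]
    intro h
    exact hs (Finset.mem_image.2 ⟨ω, Finset.mem_univ _, h⟩)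
  simp [this]

lemma ent_eq (p : Ω → ℝ) (Y : Ω → S) :
    ent p Y = - ∑ ω, p ω * Real.logb 2 (pr p Y (Y ω)) := by
  unfold ent
  congr 1
  rw [← Finset.sum_fiberwise_of_maps_to (s := Finset.univ) (t := Finset.univ.image Y) (g := Y)
    (fun x _ => Finset.mem_image_of_mem _ (Finset.mem_univ x))]
  refine Finset.sum_congr rfl fun s _ => ?_
  conv_lhs => enter [1]; unfold pr
  rw [Finset.sum_mul, Finset.sum_filter]
  refine Finset.sum_congr rfl fun ω _ => ?_
  by_cases h : Y ω = s
  · simp [h]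
  · simp [h]

lemma pr_congr_ker (p : Ω → ℝ) (Z : Ω → S) (X : Ω → T)
    (hk : ∀ x y, Z x = Z y ↔ X x = X y) (ω : Ω) : pr p Z (Z ω) = pr p X (X ω) := by
  unfold pr
  simp only [hk]

lemma ent_congr (p : Ω → ℝ) (Z : Ω → S) (X : Ω → T)
    (hk : ∀ x y, Z x = Z y ↔ X x = X y) : ent p Z = ent p X := by
  rw [ent_eq, ent_eq]
  simp only [pr_congr_ker p Z X hk]

lemma det_of (p : Ω → ℝ) (hp : ∀ x, 0 ≤ p x) (Z : Ω → S) (X : Ω → T)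
    (hk : ∀ x y, Z x = Z y → X x = X y) (he : ent p Z = ent p X) (ω : Ω) (hω : 0 < p ω) :
    pr p Z (Z ω) = pr p X (X ω) := by
  rw [ent_eq, ent_eq, neg_inj] at he
  have key := (Finset.sum_eq_sum_iff_of_le (s := Finset.univ)
    (f := fun ω => p ω * Real.logb 2 (pr p Z (Z ω)))
    (g := fun ω => p ω * Real.logb 2 (pr p X (X ω))) (by
      intro i _
      rcases (hp i).eq_or_lt with h | h
      · simp [← h]
      · have h1 := le_pr_self p hp Z i
        have h2 := pr_mono_ker p hp Z X hk i
        exact mul_le_mul_of_nonneg_left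
          (Real.logb_le_logb_of_le (by norm_num) (by linarith) h2) h.le)).1 he ω (Finset.mem_univ _)
  have h1 := le_pr_self p hp Z ω
  have h2 := le_pr_self p hp X ω
  have := mul_left_cancel₀ hω.ne' key
  exact Real.logb_injOn_pos (by norm_num) (Set.mem_Ioi.2 (by linarith))
    (Set.mem_Ioi.2 (by linarith)) this

lemma pr_fst [Fintype T] (p : Ω → ℝ) (X : Ω → S) (Y : Ω → T) (s : S) :
    ∑ t, pr p (fun ω => (X ω, Y ω)) (s, t) = pr p X s := by
  unfold pr
  rw [Finset.sum_comm]
  refine Finset.sum_congr rfl fun ω _ => ?_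
  by_cases h : X ω = s <;> simp [h]

lemma pr_snd [Fintype S] (p : Ω → ℝ) (X : Ω → S) (Y : Ω → T) (t : T) :
    ∑ s, pr p (fun ω => (X ω, Y ω)) (s, t) = pr p Y t := by
  unfold pr
  rw [Finset.sum_comm]
  refine Finset.sum_congr rfl fun ω _ => ?_
  by_cases h : Y ω = t <;> simp [h]

lemma sum_pr [Fintype S] (p : Ω → ℝ) (Y : Ω → S) : ∑ s, pr p Y s = ∑ ω, p ω := by
  simpa using sum_pr_mul p Y (fun _ => 1)

lemma indep_of [Fintype S] [Fintype T] (p : Ω → ℝ) (hp : ∀ x, 0 ≤ p x) (h1 : ∑ x, p x = 1)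
    (X : Ω → S) (Y : Ω → T) (he : ent p (fun ω => (X ω, Y ω)) = ent p X + ent p Y) (s : S) (t : T) :
    pr p (fun ω => (X ω, Y ω)) (s, t) = pr p X s * pr p Y t := by
  set Z : Ω → S × T := fun ω => (X ω, Y ω) with hZ
  set P : S × T → ℝ := pr p Z with hP
  have hPn : ∀ z, 0 ≤ P z := pr_nonneg' p hp Z
  have hA : ∀ z : S × T, P z ≤ pr p X z.1 := fun z => by
    rw [← pr_fst p X Y]
    exact Finset.single_le_sum (f := fun t => P (z.1, t)) (fun i _ => hPn _) (Finset.mem_univ z.2)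
  have hB : ∀ z : S × T, P z ≤ pr p Y z.2 := fun z => by
    rw [← pr_snd p X Y]
    exact Finset.single_le_sum (f := fun t => P (t, z.2)) (fun i _ => hPn _) (Finset.mem_univ z.1)
  have eX : ∑ z, P z * Real.log (pr p X z.1) = - ent p X * Real.log 2 := by
    rw [ent_eq, hP, sum_pr_mul p Z (fun z => Real.log (pr p X z.1)), neg_neg, Finset.sum_mul]
    refine Finset.sum_congr rfl fun ω _ => ?_
    have : Real.log 2 ≠ 0 := by positivity
    simp only [Real.logb, hZ]; field_simp
  have eY : ∑ z, P z * Real.log (pr p Y z.2) = - ent p Y * Real.log 2 := by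
    rw [ent_eq, hP, sum_pr_mul p Z (fun z => Real.log (pr p Y z.2)), neg_neg, Finset.sum_mul]
    refine Finset.sum_congr rfl fun ω _ => ?_
    have : Real.log 2 ≠ 0 := by positivity
    simp only [Real.logb, hZ]; field_simp
  have eZ : ∑ z, P z * Real.log (P z) = - ent p Z * Real.log 2 := by
    rw [ent_eq, hP, sum_pr_mul p Z (fun z => Real.log (pr p Z z)), neg_neg, Finset.sum_mul]
    refine Finset.sum_congr rfl fun ω _ => ?_
    have : Real.log 2 ≠ 0 := by positivity
    simp only [Real.logb]; field_simp
  have sP : ∑ z, P z = 1 := by rw [hP, sum_pr, h1]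
  have sAB : ∑ z : S × T, pr p X z.1 * pr p Y z.2 = 1 := by
    rw [Fintype.sum_prod_type]
    simp only [← Finset.mul_sum, sum_pr, h1, mul_one]
  have hlog : ∀ z : S × T, 0 < P z → Real.log (pr p X z.1 * pr p Y z.2 / P z)
      = Real.log (pr p X z.1) + Real.log (pr p Y z.2) - Real.log (P z) := fun z hz => by
    have a1 := hA z
    have a2 := hB z
    rw [Real.log_div (mul_ne_zero (by linarith) (by linarith)) hz.ne',
      Real.log_mul (by linarith) (by linarith)]
  have key := (Finset.sum_eq_sum_iff_of_le (s := Finset.univ)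
    (f := fun z : S × T => P z - pr p X z.1 * pr p Y z.2)
    (g := fun z => P z * Real.log (P z) - P z * Real.log (pr p X z.1)
      - P z * Real.log (pr p Y z.2)) (by
      intro z _
      rcases (hPn z).eq_or_lt with h | h
      · rw [← h]
        have := mul_nonneg (pr_nonneg' p hp X z.1) (pr_nonneg' p hp Y z.2)
        simpa using this
      · have a1 := hA z
        have a2 := hB z
        have := Real.log_le_sub_one_of_pos (x := pr p X z.1 * pr p Y z.2 / P z)
          (div_pos (mul_pos (by linarith) (by linarith)) h)
        rw [hlog z h] at this
        have h3 := mul_le_mul_of_nonneg_left this h.le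
        rw [mul_sub, mul_sub, mul_add, mul_div_cancel₀ _ h.ne'] at h3
        linarith)).1 (by
      rw [Finset.sum_sub_distrib, Finset.sum_sub_distrib, Finset.sum_sub_distrib, eX, eY, eZ, sP,
        sAB, he]
      ring) (s, t) (Finset.mem_univ _)
  dsimp only at key
  rcases (hPn (s, t)).eq_or_lt with h | h
  · rw [← h] at key ⊢
    linarith
  · have a1 := hA (s, t)
    have a2 := hB (s, t)
    dsimp only at a1 a2
    by_contra hne
    have := Real.log_lt_sub_one_of_pos (x := pr p X s * pr p Y t / P (s, t))
          (div_pos (mul_pos (by linarith) (by linarith)) h) (by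
            intro h4
            rw [div_eq_one_iff_eq h.ne'] at h4
            exact hne h4.symm)
    rw [hlog (s, t) h] at this
    have h3 := mul_lt_mul_of_pos_left this h
    rw [mul_sub, mul_sub, mul_add, mul_div_cancel₀ _ h.ne'] at h3
    linarith

lemma ent_push {S' : Type} [DecidableEq S'] [Fintype S'] (q : Ω → ℝ) (X : Ω → S') (Y : S' → S) :
    ent (pr q X) Y = ent q (fun ω => Y (X ω)) := by
  have h : ∀ s, pr (pr q X) Y s = pr q (fun ω => Y (X ω)) s := fun s => by
    have := sum_pr_mul q X (fun x => if Y x = s then 1 else 0)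
    simpa [pr] using this
  rw [ent_eq, ent_eq, sum_pr_mul q X (fun x => Real.logb 2 (pr (pr q X) Y (Y x)))]
  simp only [h]

end helpers

lemma rW12_eq (A : Finset (Fin 4)) : rW12 A = min (2 : ℝ)
    (((if 0 ∈ A ∨ 1 ∈ A then 1 else 0) + (if (2 : Fin 4) ∈ A then 1 else 0) +
      (if (3 : Fin 4) ∈ A then 1 else 0) : ℝ)) := by
  unfold rW12
  have : (A ∩ ({0,1} : Finset (Fin 4))).Nonempty ↔ 0 ∈ A ∨ 1 ∈ A := by
    revert A; decide
  simp only [this]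

lemma rkU_eq (A : Finset (Fin 4)) : rkU 2 {0,2,3} A = min (2 : ℝ)
    (((if 0 ∈ A then 1 else 0) + (if (2 : Fin 4) ∈ A then 1 else 0) +
      (if (3 : Fin 4) ∈ A then 1 else 0) : ℝ)) := by
  unfold rkU
  have : (A ∩ ({0,2,3} : Finset (Fin 4))).card = (if 0 ∈ A then 1 else 0) +
      (if (2 : Fin 4) ∈ A then 1 else 0) + (if (3 : Fin 4) ∈ A then 1 else 0) := by
    revert A; decide
  rw [this]
  push_cast
  rfl

lemma ker_restrict {m : Fin 4 → ℕ} (A : Finset (Fin 4)) (x y : ∀ i, Fin (m i)) :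
    ((fun (i : A) => x i.1) = (fun (i : A) => y i.1)) ↔
      (0 ∈ A → x 0 = y 0) ∧ (1 ∈ A → x 1 = y 1) ∧ (2 ∈ A → x 2 = y 2) ∧ (3 ∈ A → x 3 = y 3) := by
  constructor
  · intro h
    exact ⟨fun hA => congrFun h ⟨0, hA⟩, fun hA => congrFun h ⟨1, hA⟩,
      fun hA => congrFun h ⟨2, hA⟩, fun hA => congrFun h ⟨3, hA⟩⟩
  · rintro ⟨h0, h1, h2, h3⟩
    funext ⟨i, hi⟩
    fin_cases i
    exacts [h0 hi, h1 hi, h2 hi, h3 hi]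

lemma forward (a b : ℝ)
    (H : IsEntropic 4 (fun A => a * rW12 A + b * rkU 2 ({0,2,3} : Finset (Fin 4)) A)) :
    ∃ (k t : ℕ) (α : Fin t → ℕ), 0 < k ∧ (∀ i, 0 < α i) ∧ (∑ i, α i) = k ∧
        a + b = Real.logb 2 k ∧
        a = -∑ i, ((α i : ℝ) / k) * Real.logb 2 ((α i : ℝ) / k) := by
  obtain ⟨m, p, hp, h1, h⟩ := H
  simp only [rW12_eq, rkU_eq] at h
  set X0 : (∀ i, Fin (m i)) → Fin (m 0) := fun x => x 0 with hX0
  set X1 : (∀ i, Fin (m i)) → Fin (m 1) := fun x => x 1 with hX1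
  set X2 : (∀ i, Fin (m i)) → Fin (m 2) := fun x => x 2 with hX2
  set X3 : (∀ i, Fin (m i)) → Fin (m 3) := fun x => x 3 with hX3
  have e0 : ent p X0 = a + b := by
    rw [← ent_congr p (fun x (i : ({0} : Finset (Fin 4))) => x i.1) X0 (fun x y => by rw [ker_restrict {0}]; simp [X0]), ← h]; simp [Fin.ext_iff]; try norm_num
    try ring
  have e1 : ent p X1 = a := by
    rw [← ent_congr p (fun x (i : ({1} : Finset (Fin 4))) => x i.1) X1 (fun x y => by rw [ker_restrict {1}]; simp [X1]), ← h]; simp [Fin.ext_iff]; try norm_num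
    try ring
  have e2 : ent p X2 = a + b := by
    rw [← ent_congr p (fun x (i : ({2} : Finset (Fin 4))) => x i.1) X2 (fun x y => by rw [ker_restrict {2}]; simp [X2]), ← h]; simp [Fin.ext_iff]; try norm_num
    try ring
  have e3 : ent p X3 = a + b := by
    rw [← ent_congr p (fun x (i : ({3} : Finset (Fin 4))) => x i.1) X3 (fun x y => by rw [ker_restrict {3}]; simp [X3]), ← h]; simp [Fin.ext_iff]; try norm_num
    try ring
  have e01 : ent p (fun x => (X0 x, X1 x)) = a + b := by
    rw [← ent_congr p (fun x (i : ({0,1} : Finset (Fin 4))) => x i.1) (fun x => (X0 x, X1 x))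
      (fun x y => by rw [ker_restrict {0,1}]; simp [X0, X1]), ← h]; simp [Fin.ext_iff]; try norm_num
    try ring
  have e02 : ent p (fun x => (X0 x, X2 x)) = 2 * a + 2 * b := by
    rw [← ent_congr p (fun x (i : ({0,2} : Finset (Fin 4))) => x i.1) (fun x => (X0 x, X2 x))
      (fun x y => by rw [ker_restrict {0,2}]; simp [X0, X2]), ← h]; simp [Fin.ext_iff]; try norm_num
    try ring
  have e03 : ent p (fun x => (X0 x, X3 x)) = 2 * a + 2 * b := by
    rw [← ent_congr p (fun x (i : ({0,3} : Finset (Fin 4))) => x i.1) (fun x => (X0 x, X3 x))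
      (fun x y => by rw [ker_restrict {0,3}]; simp [X0, X3]), ← h]; simp [Fin.ext_iff]; try norm_num
    try ring
  have e23 : ent p (fun x => (X2 x, X3 x)) = 2 * a + 2 * b := by
    rw [← ent_congr p (fun x (i : ({2,3} : Finset (Fin 4))) => x i.1) (fun x => (X2 x, X3 x))
      (fun x y => by rw [ker_restrict {2,3}]; simp [X2, X3]), ← h]; simp [Fin.ext_iff]; try norm_num
    try ring
  have e023 : ent p (fun x => (X0 x, X2 x, X3 x)) = 2 * a + 2 * b := by
    rw [← ent_congr p (fun x (i : ({0,2,3} : Finset (Fin 4))) => x i.1) (fun x => (X0 x, X2 x, X3 x))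
      (fun x y => by rw [ker_restrict {0,2,3}]; simp [X0, X2, X3]), ← h]; simp [Fin.ext_iff]; try norm_num
    try ring
  clear h
  have i02 := indep_of p hp h1 X0 X2 (by linarith)
  have i03 := indep_of p hp h1 X0 X3 (by linarith)
  have i23 := indep_of p hp h1 X2 X3 (by linarith)
  have d02 := det_of p hp (fun x => (X0 x, X2 x, X3 x)) (fun x => (X0 x, X2 x))
    (by intro x y hh; simp_all) (by linarith)
  have d03 := det_of p hp (fun x => (X0 x, X2 x, X3 x)) (fun x => (X0 x, X3 x))
    (by intro x y hh; simp_all) (by linarith)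
  have d23 := det_of p hp (fun x => (X0 x, X2 x, X3 x)) (fun x => (X2 x, X3 x))
    (by intro x y hh; simp_all) (by linarith)
  have d01 := det_of p hp (fun x => (X0 x, X1 x)) X0
    (by intro x y hh; simp_all) (by linarith)
  have eq02 : ∀ x, 0 < p x → pr p X0 (X0 x) = pr p X2 (X2 x) := fun x hx => by
    have a1 := d03 x hx
    have a2 := d23 x hx
    rw [a1, i03, i23] at a2
    have := le_pr_self p hp X3 x
    exact mul_right_cancel₀ (by linarith) a2
  obtain ⟨x₀, hx₀⟩ : ∃ x, 0 < p x := by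
    by_contra! hc
    have := Finset.sum_nonpos (s := Finset.univ) (fun i _ => hc i)
    linarith
  set c := pr p X2 (X2 x₀) with hc
  have hcpos : 0 < c := hx₀.trans_le (le_pr_self p hp X2 x₀)
  have hunif : ∀ s, 0 < pr p X0 s → pr p X0 s = c := fun s hs => by
    have := i02 s (X2 x₀)
    obtain ⟨ω, hω, hh⟩ := exists_of_pr_pos p _ (s, X2 x₀) (by rw [this]; exact mul_pos hs hcpos)
    have h5 := eq02 ω hω
    rw [Prod.mk.injEq] at hh
    rw [hh.1, hh.2] at h5
    exact h5
  -- k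
  let S0 := Finset.univ.filter (fun s => 0 < pr p X0 s)
  have hkc : (S0.card : ℝ) * c = 1 := by
    rw [← h1, ← sum_pr p X0, ← Finset.sum_filter_add_sum_filter_not _ (fun s => 0 < pr p X0 s)]
    rw [Finset.sum_congr rfl (g := fun _ => c) (fun s hs => hunif s (Finset.mem_filter.1 hs).2),
      Finset.sum_eq_zero (s := Finset.univ.filter (fun s => ¬ 0 < pr p X0 s))
      (fun s hs => le_antisymm (not_lt.1 (Finset.mem_filter.1 hs).2) (pr_nonneg' p hp X0 s))]
    simp [S0]
  have hcard : 0 < S0.card := by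
    rw [Nat.pos_iff_ne_zero]; intro h0; rw [h0] at hkc; simp at hkc
  have hcardR : (0 : ℝ) < S0.card := by exact_mod_cast hcard
  have hceq : c = 1 / S0.card := by field_simp; linarith
  let α : Fin (m 1) → ℕ := fun j =>
    (Finset.univ.filter (fun s => 0 < pr p (fun x => (X0 x, X1 x)) (s, j))).card
  have hα : ∀ j, pr p X1 j = (α j : ℝ) / S0.card := fun j => by
    rw [← pr_snd p X0 X1, ← Finset.sum_filter_add_sum_filter_not _
      (fun s => 0 < pr p (fun x => (X0 x, X1 x)) (s, j))]
    rw [Finset.sum_congr rfl (g := fun _ => c) (fun s hs => ?_),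
      Finset.sum_eq_zero (fun s hs =>
        le_antisymm (not_lt.1 (Finset.mem_filter.1 hs).2) (pr_nonneg' p hp _ _))]
    · simp [α, hceq, div_eq_mul_inv]
    · obtain ⟨ω, hω, hh⟩ := exists_of_pr_pos p _ _ (Finset.mem_filter.1 hs).2
      have h5 := d01 ω hω
      rw [hh] at h5
      rw [h5]
      exact hunif _ (hω.trans_le (le_pr_self p hp X0 ω))
  let T1 := Finset.univ.filter (fun j => 0 < α j)
  have hsumT : ∀ g : Fin (m 1) → ℝ, (∀ j, α j = 0 → g j = 0) →
      ∑ i, g (T1.equivFin.symm i).1 = ∑ j, g j := fun g hg => by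
    rw [Equiv.sum_comp T1.equivFin.symm (fun j => g j.1), Finset.sum_coe_sort T1 g]
    refine Finset.sum_subset (Finset.subset_univ _) fun j _ hj => hg j ?_
    by_contra h0
    exact hj (Finset.mem_filter.2 ⟨Finset.mem_univ _, Nat.pos_of_ne_zero h0⟩)
  refine ⟨S0.card, T1.card, fun i => α (T1.equivFin.symm i).1, hcard,
    fun i => (Finset.mem_filter.1 (T1.equivFin.symm i).2).2, ?_, ?_, ?_⟩
  · have h6 : ∑ j, (α j : ℝ) / S0.card = 1 := by
      rw [← h1, ← sum_pr p X1]; exact Finset.sum_congr rfl fun j _ => (hα j).symm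
    rw [← Finset.sum_div, div_eq_one_iff_eq hcardR.ne'] at h6
    have h7 := hsumT (fun j => (α j : ℝ)) (fun j hj => by simp [hj])
    rw [h6] at h7
    exact_mod_cast h7
  · rw [← e0, ent_eq]
    rw [Finset.sum_congr rfl (g := fun x => p x * Real.logb 2 c) (fun x _ => ?_)]
    · rw [← Finset.sum_mul, h1, hceq]
      simp
    · rcases (hp x).eq_or_lt with hx | hx
      · simp [← hx]
      · rw [hunif _ (hx.trans_le (le_pr_self p hp X0 x))]
  · rw [hsumT (fun j => (α j : ℝ) / S0.card * Real.logb 2 ((α j : ℝ) / S0.card))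
      (fun j hj => by simp [hj]), ← e1, ent_univ]
    simp only [hα]

set_option maxHeartbeats 2000000 in
lemma backward (a b : ℝ) (k t : ℕ) (α : Fin t → ℕ) (hk : 0 < k) (hpos : ∀ i, 0 < α i)
    (hsum : (∑ i, α i) = k) (hab : a + b = Real.logb 2 k)
    (ha : a = -∑ i, ((α i : ℝ) / k) * Real.logb 2 ((α i : ℝ) / k)) :
    IsEntropic 4 (fun A => a * rW12 A + b * rkU 2 ({0,2,3} : Finset (Fin 4)) A) := by
  have : NeZero k := ⟨hk.ne'⟩
  have hkR : (0 : ℝ) < k := by exact_mod_cast hk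
  obtain ⟨f, hf⟩ : ∃ f : Fin k → Fin t, ∀ j, (Finset.univ.filter (fun z => f z = j)).card = α j := by
    subst hsum
    refine ⟨fun z => (finSigmaFinEquiv.symm z).1, fun j => ?_⟩
    rw [← Fintype.card_subtype, ← Fintype.card_fin (α j)]
    refine Fintype.card_congr ?_
    exact (finSigmaFinEquiv.symm.subtypeEquiv (fun z => Iff.rfl)).trans
      (Equiv.sigmaSubtype j)
  have hsz : ∀ g : Fin t → ℝ, ∑ z : Fin k, g (f z) = ∑ j, (α j : ℝ) * g j := fun g => by
    rw [← Finset.sum_fiberwise_of_maps_to (s := Finset.univ) (t := Finset.univ) (g := f)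
      (fun x _ => Finset.mem_univ _)]
    refine Finset.sum_congr rfl fun j _ => ?_
    rw [Finset.sum_congr rfl (g := fun _ => g j)
      (fun z hz => by rw [(Finset.mem_filter.1 hz).2]), Finset.sum_const, hf, nsmul_eq_mul]
  let q : Fin k × Fin k → ℝ := fun _ => 1 / (k : ℝ) ^ 2
  have hq1 : ∑ ω, q ω = 1 := by
    simp only [q, Finset.sum_const, Finset.card_univ, Fintype.card_prod, Fintype.card_fin,
      nsmul_eq_mul]
    push_cast
    field_simp
  have hconst : ∀ {R : Type} [DecidableEq R] (Y : Fin k × Fin k → R) (c : ℝ),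
      (∀ ω, pr q Y (Y ω) = c) → ent q Y = - Real.logb 2 c := fun Y c hY => by
    rw [ent_eq]
    simp only [hY]
    rw [← Finset.sum_mul, hq1, one_mul]
  have hsumf : ∑ ω : Fin k × Fin k, q ω * Real.logb 2 ((α (f ω.1) : ℝ) / k) = - a := by
    rw [Fintype.sum_prod_type]
    simp only [q, Finset.sum_const, Finset.card_univ, Fintype.card_fin, nsmul_eq_mul]
    rw [hsz (fun j => (k : ℝ) * (1 / (k : ℝ) ^ 2 * Real.logb 2 ((α j : ℝ) / k))), ha, neg_neg]
    refine Finset.sum_congr rfl fun j _ => ?_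
    field_simp
  have hcountf : ∀ j, (∑ z : Fin k, if f z = j then (1 : ℝ) else 0) = α j := fun j => by
    rw [← hf j]; simp
  have E : ent q (fun _ => ()) = 0 := by
    rw [hconst _ 1 (fun ω => by simpa [pr] using hq1)]; simp
  have hlk : - Real.logb 2 (1 / (k : ℝ)) = a + b := by rw [hab]; simp
  have E0 : ent q (fun ω => ω.1) = a + b := by
    rw [hconst _ (1 / (k : ℝ)) (fun ω => ?_), hlk]
    simp only [pr, q]
    rw [Fintype.sum_prod_type]
    simp
    field_simp
  have E2 : ent q (fun ω => ω.2) = a + b := by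
    rw [hconst _ (1 / (k : ℝ)) (fun ω => ?_), hlk]
    simp only [pr, q]
    rw [Fintype.sum_prod_type]
    simp
    field_simp
  have hsub : ∀ z u v : Fin k, z - u = v ↔ u = z - v := fun z u v => by
    constructor
    · rintro rfl; simp
    · rintro rfl; simp
  have E3 : ent q (fun ω => ω.1 - ω.2) = a + b := by
    rw [hconst _ (1 / (k : ℝ)) (fun ω => ?_), hlk]
    simp only [pr, q]
    rw [Fintype.sum_prod_type]
    simp only [hsub]
    simp
    field_simp
  have E02 : ent q (fun ω => ω) = 2 * a + 2 * b := by
    rw [hconst _ ((1 / (k : ℝ)) ^ 2) (fun ω => ?_), Real.logb_pow]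
    · push_cast; linarith
    · simp [pr, q]
  have E1 : ent q (fun ω => f ω.1) = a := by
    rw [ent_eq]
    have : ∀ ω : Fin k × Fin k, pr q (fun ω => f ω.1) (f ω.1) = (α (f ω.1) : ℝ) / k := fun ω => by
      rw [← hcountf]
      simp only [pr, q]
      rw [Fintype.sum_prod_type, Finset.sum_div]
      refine Finset.sum_congr rfl fun z _ => ?_
      by_cases hz : f z = f ω.1
      · simp [hz]; field_simp
      · simp [hz]
    simp only [this, hsumf, neg_neg]
  have hlog2 : ∀ ω : Fin k × Fin k, Real.logb 2 ((α (f ω.1) : ℝ) / k ^ 2) =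
      Real.logb 2 ((α (f ω.1) : ℝ) / k) - (a + b) := fun ω => by
    have h0 : (α (f ω.1) : ℝ) ≠ 0 := by exact_mod_cast (hpos _).ne'
    rw [hab, ← Real.logb_div (div_ne_zero h0 hkR.ne') hkR.ne']
    congr 1
    field_simp
  have E12 : ent q (fun ω => (f ω.1, ω.2)) = 2 * a + b := by
    rw [ent_eq]
    have : ∀ ω : Fin k × Fin k, pr q (fun ω => (f ω.1, ω.2)) (f ω.1, ω.2)
        = (α (f ω.1) : ℝ) / k ^ 2 := fun ω => by
      rw [← hcountf]
      simp only [pr, q]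
      rw [Fintype.sum_prod_type, Finset.sum_div]
      refine Finset.sum_congr rfl fun z _ => ?_
      by_cases hz : f z = f ω.1
      · simp [hz]
      · simp [hz]
    simp only [this, hlog2, mul_sub, Finset.sum_sub_distrib, hsumf]
    rw [← Finset.sum_mul, hq1]; ring
  have E13 : ent q (fun ω => (f ω.1, ω.1 - ω.2)) = 2 * a + b := by
    rw [ent_eq]
    have : ∀ ω : Fin k × Fin k, pr q (fun ω => (f ω.1, ω.1 - ω.2)) (f ω.1, ω.1 - ω.2)
        = (α (f ω.1) : ℝ) / k ^ 2 := fun ω => by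
      rw [← hcountf]
      simp only [pr, q]
      rw [Fintype.sum_prod_type, Finset.sum_div]
      refine Finset.sum_congr rfl fun z _ => ?_
      by_cases hz : f z = f ω.1
      · simp only [Prod.mk.injEq, hsub, hz]; simp
      · simp [hz]
    simp only [this, hlog2, mul_sub, Finset.sum_sub_distrib, hsumf]
    rw [← Finset.sum_mul, hq1]; ring
  let X : Fin k × Fin k → (∀ _ : Fin 4, Fin (k + t)) := fun ω =>
    ![Fin.castAdd t ω.1, Fin.natAdd k (f ω.1), Fin.castAdd t ω.2, Fin.castAdd t (ω.1 - ω.2)]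
  refine ⟨fun _ => k + t, pr q X, pr_nonneg' q (fun _ => by positivity) X,
    by rw [sum_pr, hq1], fun A => ?_⟩
  rw [ent_push]
  have hker : ∀ x y, ((fun (i : A) => X x i.1) = (fun (i : A) => X y i.1)) ↔
      (0 ∈ A → x.1 = y.1) ∧ (1 ∈ A → f x.1 = f y.1) ∧ (2 ∈ A → x.2 = y.2) ∧
      (3 ∈ A → x.1 - x.2 = y.1 - y.2) := fun x y => by
    rw [ker_restrict (m := fun _ => k + t)]
    simp [X]
  have c1 : ∀ x y : Fin k × Fin k, x = y ↔ x.1 = y.1 ∧ x.2 = y.2 := fun x y => Prod.ext_iff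
  have c2 : ∀ x y : Fin k × Fin k, x.1 - x.2 = y.1 - y.2 → x.1 = y.1 → x.2 = y.2 :=
    fun x y h h' => by rw [h'] at h; exact sub_right_injective h
  have c3 : ∀ x y : Fin k × Fin k, x.1 - x.2 = y.1 - y.2 → x.2 = y.2 → x.1 = y.1 :=
    fun x y h h' => by rw [h'] at h; exact sub_left_injective h
  have c4 : ∀ x y : Fin k × Fin k, x.1 = y.1 → f x.1 = f y.1 := fun x y h => by rw [h]
  have c5 : ∀ x y : Fin k × Fin k, x.1 = y.1 → x.2 = y.2 → x.1 - x.2 = y.1 - y.2 :=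
    fun x y h h' => by rw [h, h']
  beta_reduce
  rw [rW12_eq, rkU_eq]
  by_cases m0 : 0 ∈ A <;> by_cases m1 : 1 ∈ A <;> by_cases m2 : 2 ∈ A <;> by_cases m3 : 3 ∈ A <;>
    simp only [m0, m1, m2, m3, true_imp_iff, false_imp_iff, true_and, and_true, if_true, if_false,
      or_true, true_or, or_self] at hker ⊢
  all_goals first
    | (refine Eq.trans ?_ ((ent_congr q _ (fun ω => ω) ?_).trans E02).symm
       · first | (norm_num; done) | (norm_num; ring1)
       · intro x y
         refine (hker x y).trans ?_
         have h2 := c2 x y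
         have h3 := c3 x y
         have h4 := c4 x y
         have h5 := c5 x y
         clear * - h2 h3 h4 h5
         first | exact Iff.rfl | exact Prod.ext_iff.symm | (simp; done) | ((try simp only [Prod.ext_iff]); tauto))
    | (refine Eq.trans ?_ ((ent_congr q _ (fun ω => ω.1) ?_).trans E0).symm
       · first | (norm_num; done) | (norm_num; ring1)
       · intro x y
         refine (hker x y).trans ?_
         have h2 := c2 x y
         have h3 := c3 x y
         have h4 := c4 x y
         have h5 := c5 x y
         clear * - h2 h3 h4 h5
         first | exact Iff.rfl | exact Prod.ext_iff.symm | (simp; done) | ((try simp only [Prod.ext_iff]); tauto))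
    | (refine Eq.trans ?_ ((ent_congr q _ (fun ω => f ω.1) ?_).trans E1).symm
       · first | (norm_num; done) | (norm_num; ring1)
       · intro x y
         refine (hker x y).trans ?_
         have h2 := c2 x y
         have h3 := c3 x y
         have h4 := c4 x y
         have h5 := c5 x y
         clear * - h2 h3 h4 h5
         first | exact Iff.rfl | exact Prod.ext_iff.symm | (simp; done) | ((try simp only [Prod.ext_iff]); tauto))
    | (refine Eq.trans ?_ ((ent_congr q _ (fun ω => ω.2) ?_).trans E2).symm
       · first | (norm_num; done) | (norm_num; ring1)
       · intro x y
         refine (hker x y).trans ?_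
         have h2 := c2 x y
         have h3 := c3 x y
         have h4 := c4 x y
         have h5 := c5 x y
         clear * - h2 h3 h4 h5
         first | exact Iff.rfl | exact Prod.ext_iff.symm | (simp; done) | ((try simp only [Prod.ext_iff]); tauto))
    | (refine Eq.trans ?_ ((ent_congr q _ (fun ω => ω.1 - ω.2) ?_).trans E3).symm
       · first | (norm_num; done) | (norm_num; ring1)
       · intro x y
         refine (hker x y).trans ?_
         have h2 := c2 x y
         have h3 := c3 x y
         have h4 := c4 x y
         have h5 := c5 x y
         clear * - h2 h3 h4 h5
         first | exact Iff.rfl | exact Prod.ext_iff.symm | (simp; done) | ((try simp only [Prod.ext_iff]); tauto))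
    | (refine Eq.trans ?_ ((ent_congr q _ (fun ω => (f ω.1, ω.2)) ?_).trans E12).symm
       · first | (norm_num; done) | (norm_num; ring1)
       · intro x y
         refine (hker x y).trans ?_
         have h2 := c2 x y
         have h3 := c3 x y
         have h4 := c4 x y
         have h5 := c5 x y
         clear * - h2 h3 h4 h5
         first | exact Iff.rfl | exact Prod.ext_iff.symm | (simp; done) | ((try simp only [Prod.ext_iff]); tauto))
    | (refine Eq.trans ?_ ((ent_congr q _ (fun ω => (f ω.1, ω.1 - ω.2)) ?_).trans E13).symm
       · first | (norm_num; done) | (norm_num; ring1)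
       · intro x y
         refine (hker x y).trans ?_
         have h2 := c2 x y
         have h3 := c3 x y
         have h4 := c4 x y
         have h5 := c5 x y
         clear * - h2 h3 h4 h5
         first | exact Iff.rfl | exact Prod.ext_iff.symm | (simp; done) | ((try simp only [Prod.ext_iff]); tauto))
    | (refine Eq.trans ?_ ((ent_congr q _ (fun ω => ()) ?_).trans E).symm
       · first | (norm_num; done) | (norm_num; ring1)
       · intro x y
         refine (hker x y).trans ?_
         have h2 := c2 x y
         have h3 := c3 x y
         have h4 := c4 x y
         have h5 := c5 x y
         clear * - h2 h3 h4 h5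
         first | exact Iff.rfl | exact Prod.ext_iff.symm | (simp; done) | ((try simp only [Prod.ext_iff]); tauto))

theorem face_W12_U134_23 (a b : ℝ) (ha : 0 ≤ a) (hb : 0 ≤ b) :
    IsEntropic 4
      (fun A => a * rW12 A + b * rkU 2 ({0,2,3} : Finset (Fin 4)) A)
    ↔ ∃ (k t : ℕ) (α : Fin t → ℕ), 0 < k ∧ (∀ i, 0 < α i) ∧ (∑ i, α i) = k ∧
        a + b = Real.logb 2 k ∧
        a = -∑ i, ((α i : ℝ) / k) * Real.logb 2 ((α i : ℝ) / k) := by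
  constructor
  · exact forward a b
  · rintro ⟨k, t, α, hk, hpos, hsum, hab, ha'⟩
    exact backward a b k t α hk hpos hsum hab ha'
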